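/- For every n ≥ 1, the number of neutral normal forms of size n equals the number of Motzkin trees with n nodes. (Equivalently, the maps MoToNe and NeToMo of the paper are mutually inverse size-preserving bijections between Motzkin trees and neutral normal forms.) -/

import Mathlib

/-- Lambda terms with de Bruijn indices. -/
inductive Term : Type
  | var : ℕ → Term
  | app : Term → Term → Term
  | abs : Term → Term

namespace Term

/-- Natural size: every operator (zero, successor, application, abstraction) has size 1. -/
def size : Term → ℕ
  | var k => k + 1
  | app M N => M.size + N.size + 1
  | abs M => M.size + 1

end Term

/-- `L n` is the number of lambda terms of size `n`. -/
noncomputable def L (n : ℕ) : ℕ := Nat.card {t : Term // t.size = n}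


mutual
  /-- Normal forms: terms with no subterm of the form `app (abs M) N`. -/
  inductive IsNormal : Term → Prop
    | of_neutral {t : Term} : IsNeutralNormal t → IsNormal t
    | abs {t : Term} : IsNormal t → IsNormal (Term.abs t)

  /-- Neutral normal forms: normal forms whose outermost constructor is `var` or `app`. -/
  inductive IsNeutralNormal : Term → Prop
    | var (k : ℕ) : IsNeutralNormal (Term.var k)
    | app {m n : Term} : IsNeutralNormal m → IsNormal n → IsNeutralNormal (Term.app m n)
end

/-- Motzkin trees (unary-binary trees): every node has 0, 1 or 2 ordered children. -/
inductive Motzkin : Type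
  | leaf : Motzkin
  | un : Motzkin → Motzkin
  | bin : Motzkin → Motzkin → Motzkin

/-- Number of nodes of a Motzkin tree. -/
def Motzkin.size : Motzkin → ℕ
  | .leaf => 1
  | .un t => t.size + 1
  | .bin l r => l.size + r.size + 1

/-!
Neutral normal forms are freely generated, just like Motzkin trees, by a constant, a unary operation
and a binary one, each contributing one to the size: the constant is `var 0`, the binary operation
is application, and the unary operation sends `var k` to `var (k + 1)` and `app M N` to
`app M (abs N)`. A neutral normal form `app M (λᵏ N)` with `N` neutral is thus read uniquely as
`k` unary nodes above a binary node.
-/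

namespace Term

/-- The operation on terms which corresponds, on neutral normal forms, to adding a unary node at the
root of a Motzkin tree. The value at an abstraction, which is never neutral, is chosen so that
`toMotzkin_succ` holds for all terms. -/
def succ : Term → Term
  | var k => var (k + 1)
  | app M N => app M (abs N)
  | abs M => abs (abs M)

/-- The map `NeToMo` of the paper, from neutral normal forms to Motzkin trees, extended to all terms
by reading an abstraction as a unary node. -/
def toMotzkin : Term → Motzkin
  | var 0 => .leaf
  | var (k + 1) => .un (var k).toMotzkin
  | app M (abs N) => .un (app M N).toMotzkin
  | app M N => .bin M.toMotzkin N.toMotzkin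
  | abs M => .un M.toMotzkin
termination_by t => t.size
decreasing_by all_goals simp only [size]; omega

theorem size_toMotzkin (t : Term) : t.toMotzkin.size = t.size := by
  fun_induction toMotzkin t <;> grind only [Motzkin.size, size]

theorem toMotzkin_succ (t : Term) : t.succ.toMotzkin = .un t.toMotzkin := by
  cases t <;> simp only [succ, toMotzkin]

end Term

namespace IsNeutralNormal

theorem toMotzkin_app {N : Term} (hN : IsNeutralNormal N) (M : Term) :
    (M.app N).toMotzkin = .bin M.toMotzkin N.toMotzkin := by
  cases hN <;> simp only [Term.toMotzkin]

theorem succ {t : Term} (ht : IsNeutralNormal t) : IsNeutralNormal t.succ := by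
  cases ht with
  | var k => exact .var (k + 1)
  | app hM hN => exact .app hM (.abs hN)

theorem motzkin_induction {motive : (t : Term) → IsNeutralNormal t → Prop}
    (zero : motive (.var 0) (.var 0))
    (succ : ∀ (t : Term) (ht : IsNeutralNormal t), motive t ht → motive t.succ ht.succ)
    (app : ∀ (M N : Term) (hM : IsNeutralNormal M) (hN : IsNeutralNormal N),
      motive M hM → motive N hN → motive (M.app N) (.app hM (.of_neutral hN)))
    {t : Term} (ht : IsNeutralNormal t) : motive t ht := by
  -- A normal form `N` is treated as a potential argument, so that its leading abstractions are
  -- absorbed by `succ` once a head `M` is supplied.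
  refine IsNeutralNormal.rec (motive_2 := motive)
    (motive_1 := fun N hN => ∀ (M : Term) (hM : IsNeutralNormal M),
      motive M hM → motive (M.app N) (.app hM hN))
    ?of_neutral ?abs ?var ?app ht
  case of_neutral => exact fun hN ihN M hM ihM => app M _ hM hN ihM ihN
  case abs => exact fun hN ihN M hM ihM => succ (M.app _) (.app hM hN) (ihN M hM ihM)
  case var =>
    intro k
    induction k with
    | zero => exact zero
    | succ k ih => exact succ (.var k) (.var k) ih
  case app => exact fun hM _ ihM ihN => ihN _ hM ihM

end IsNeutralNormal

namespace Motzkin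

/-- The map `MoToNe` of the paper, from Motzkin trees to neutral normal forms. -/
def toNeutral : Motzkin → Term
  | leaf => .var 0
  | un m => m.toNeutral.succ
  | bin l r => .app l.toNeutral r.toNeutral

theorem isNeutralNormal_toNeutral (m : Motzkin) : IsNeutralNormal m.toNeutral := by
  induction m with
  | leaf => exact .var 0
  | un m ih => exact ih.succ
  | bin l r ihl ihr => exact .app ihl (.of_neutral ihr)

theorem toMotzkin_toNeutral (m : Motzkin) : m.toNeutral.toMotzkin = m := by
  induction m with
  | leaf => simp only [toNeutral, Term.toMotzkin]
  | un m ih => rw [toNeutral, Term.toMotzkin_succ, ih]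
  | bin l r ihl ihr => rw [toNeutral, r.isNeutralNormal_toNeutral.toMotzkin_app, ihl, ihr]

end Motzkin

theorem IsNeutralNormal.toNeutral_toMotzkin {t : Term} (ht : IsNeutralNormal t) :
    t.toMotzkin.toNeutral = t := by
  induction ht using IsNeutralNormal.motzkin_induction with
  | zero => simp only [Term.toMotzkin, Motzkin.toNeutral]
  | succ t _ ih => rw [Term.toMotzkin_succ, Motzkin.toNeutral, ih]
  | app M N _ hN ihM ihN => rw [hN.toMotzkin_app, Motzkin.toNeutral, ihM, ihN]

/-- The size-preserving bijection between neutral normal forms and Motzkin trees given by `NeToMo`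
and `MoToNe`. -/
def neutralNormalEquivMotzkin : {t : Term // IsNeutralNormal t} ≃ Motzkin where
  toFun t := t.1.toMotzkin
  invFun m := ⟨m.toNeutral, m.isNeutralNormal_toNeutral⟩
  left_inv t := Subtype.ext t.2.toNeutral_toMotzkin
  right_inv m := m.toMotzkin_toNeutral

theorem size_neutralNormalEquivMotzkin (t : {t : Term // IsNeutralNormal t}) :
    (neutralNormalEquivMotzkin t).size = t.1.size :=
  t.1.size_toMotzkin

theorem neutralNormal_equinumerous_motzkin :
    ∀ n : ℕ, 1 ≤ n →
      Nat.card {t : Term // IsNeutralNormal t ∧ t.size = n}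
        = Nat.card {m : Motzkin // m.size = n} := by
  intro n _
  exact Nat.card_congr <|
    (Equiv.subtypeSubtypeEquivSubtypeInter IsNeutralNormal (Term.size · = n)).symm.trans
      (neutralNormalEquivMotzkin.subtypeEquiv fun t => by
        rw [size_neutralNormalEquivMotzkin])
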